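/- arXiv:2410.08039 — 2 statements merged into one kernel-verified Lean document; each statement's English description precedes it below -/
import Mathlib

section
/- Let N ≥ 1, 1 < p ≤ q < ∞, and let g, h : ℝ^N → (0,∞) be measurable functions, positive almost everywhere, with g ∈ L¹(ℝ^N \ {0}) and h^{1−p'} ∈ L¹_loc(ℝ^N). Define G(x) = ∫_{ℝ^N \ B(0,|x|)} g(y) dy and H(x) = ∫_{B(0,|x|)} h(y)^{1−p'} dy. If D₁ := sup_{x ≠ 0} G(x)^{1/q} H(x)^{1/p'} < ∞, then for every measurable function f : ℝ^N → ℂ one has ( ∫_{ℝ^N} ( ∫_{B(0,|x|)} |f(y)| dy )^q g(x) dx )^{1/q} ≤ D₁ (p')^{1/p'} p^{1/q} ( ∫_{ℝ^N} |f(x)|^p h(x) dx )^{1/p}. -/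
open MeasureTheory Metric ENNReal

/-!
Put `σ = h ^ (1 - p') dx` and `μ = g dx`; writing `f = φ * h ^ (1 - p')` turns the claim into an
inequality between `∫ (∫_{|y| < |x|} φ dσ) ^ q dμ` and `∫ φ ^ p dσ` in which `σ` and `μ` only meet
through `D₁`. The one-dimensional substance is that `H y = σ {|·| ≤ |y|}` satisfies `σ {H ≤ t} ≤ t`,
which by the layer-cake formula yields `∫_B H ^ (-1/p) dσ ≤ p' * σ(B) ^ (1/p')` on every ball `B`.
Hölder's inequality with the splitting `φ = φ H ^ (1/(pp')) * H ^ (-1/(pp'))` bounds the inner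
integral, `D₁` trades the resulting power of `σ(B)` for a power of the tail `G` of `μ`, Minkowski's
integral inequality with exponent `q / p` exchanges the integrations, and the bound on
`∫ H ^ (-1/p) dσ`, now applied to `G` and `μ` with `p'` in place of `p`, finishes the proof.
-/

section LinearOrder

variable {α ι : Type*} [MeasurableSpace α] [LinearOrder ι] [TopologicalSpace ι]
  [OrderClosedTopology ι] [SecondCountableTopology ι]

lemma exists_countable_biUnion_Iic_eq (A : Set ι) :
    ∃ T ⊆ A, T.Countable ∧ ⋃ a ∈ T, Set.Iic a = ⋃ a ∈ A, Set.Iic a := by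
  by_cases hmax : ∃ m ∈ A, ∀ a ∈ A, a ≤ m
  · obtain ⟨m, hmA, hm⟩ := hmax
    refine ⟨{m}, Set.singleton_subset_iff.2 hmA, Set.countable_singleton m, ?_⟩
    rw [Set.biUnion_singleton]
    exact (Set.subset_biUnion_of_mem hmA).antisymm
      (Set.iUnion₂_subset fun a ha => Set.Iic_subset_Iic.2 (hm a ha))
  · push Not at hmax
    obtain ⟨T, hTA, hTc, hT⟩ :=
      TopologicalSpace.isOpen_biUnion_countable A Set.Iio fun _ _ => isOpen_Iio
    refine ⟨T, hTA, hTc, (Set.biUnion_subset_biUnion_left hTA).antisymm ?_⟩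
    refine Set.iUnion₂_subset fun a ha z hz => ?_
    obtain ⟨b, hb, hab⟩ := hmax a ha
    have hzT : z ∈ ⋃ c ∈ T, Set.Iio c := hT ▸ Set.mem_biUnion hb (lt_of_le_of_lt hz hab)
    exact Set.iUnion₂_mono (fun c _ => Set.Iio_subset_Iic_self) hzT

lemma measure_biUnion_preimage_Iic (μ : Measure α) (u : α → ι) (A : Set ι) :
    μ (⋃ a ∈ A, u ⁻¹' Set.Iic a) = ⨆ a ∈ A, μ (u ⁻¹' Set.Iic a) := by
  obtain ⟨T, hTA, hTc, hT⟩ := exists_countable_biUnion_Iic_eq A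
  refine le_antisymm ?_ (iSup₂_le fun a ha =>
    measure_mono (Set.subset_biUnion_of_mem (u := fun a => u ⁻¹' Set.Iic a) ha))
  have hmono : Monotone fun a => u ⁻¹' Set.Iic a :=
    fun _ _ hab => Set.preimage_mono (Set.Iic_subset_Iic.2 hab)
  have hdir : DirectedOn (Function.onFun (· ⊆ ·) fun a => u ⁻¹' Set.Iic a) T := fun a ha b hb =>
    ⟨max a b, max_rec' (· ∈ T) ha hb, hmono (le_max_left a b), hmono (le_max_right a b)⟩
  rw [← Set.preimage_iUnion₂, ← hT, Set.preimage_iUnion₂, measure_biUnion_eq_iSup hTc hdir]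
  exact biSup_mono hTA

lemma measure_biUnion_preimage_Ici (μ : Measure α) (u : α → ι) (A : Set ι) :
    μ (⋃ a ∈ A, u ⁻¹' Set.Ici a) = ⨆ a ∈ A, μ (u ⁻¹' Set.Ici a) :=
  measure_biUnion_preimage_Iic (ι := ιᵒᵈ) μ u A

lemma measure_setOf_measure_preimage_Iic_le (μ : Measure α) (u : α → ι) (t : ℝ≥0∞) :
    μ {x | μ (u ⁻¹' Set.Iic (u x)) ≤ t} ≤ t := by
  set A : Set ι := {a | μ (u ⁻¹' Set.Iic a) ≤ t}
  calc μ (u ⁻¹' A) ≤ μ (⋃ a ∈ A, u ⁻¹' Set.Iic a) :=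
        measure_mono fun x hx => Set.mem_biUnion hx (le_refl (u x))
    _ = ⨆ a ∈ A, μ (u ⁻¹' Set.Iic a) := measure_biUnion_preimage_Iic μ u A
    _ ≤ t := iSup₂_le fun _ ha => ha

lemma measure_setOf_measure_preimage_Ici_le (μ : Measure α) (u : α → ι) (t : ℝ≥0∞) :
    μ {x | μ (u ⁻¹' Set.Ici (u x)) ≤ t} ≤ t :=
  measure_setOf_measure_preimage_Iic_le (ι := ιᵒᵈ) μ u t

lemma ae_measure_preimage_Ici_ne_zero (μ : Measure α) (u : α → ι) :
    ∀ᵐ x ∂μ, μ (u ⁻¹' Set.Ici (u x)) ≠ 0 := by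
  simpa [ae_iff] using measure_setOf_measure_preimage_Ici_le μ u 0

/- Spheres `{u = u y}` may have positive `μ`- and `σ`-measure, so moving the sphere from `μ` to `σ`
is not free: it uses that `{u > u y}` is exhausted by sets `{u ≥ u x}` with `u x > u y`. -/
lemma rpow_measure_preimage_Ioi_mul_Iic_le {μ σ : Measure α} {u : α → ι} {s t : ℝ} (hs : 0 < s)
    (ht : 0 ≤ t) {D : ℝ≥0∞}
    (hD : ∀ x, μ (u ⁻¹' Set.Ici (u x)) ^ s * σ (u ⁻¹' Set.Iio (u x)) ^ t ≤ D) (y : α) :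
    μ (u ⁻¹' Set.Ioi (u y)) ^ s * σ (u ⁻¹' Set.Iic (u y)) ^ t ≤ D := by
  set A : Set ι := u '' (u ⁻¹' Set.Ioi (u y))
  have hunion : u ⁻¹' Set.Ioi (u y) ⊆ ⋃ a ∈ A, u ⁻¹' Set.Ici a := fun x hx =>
    Set.mem_biUnion (Set.mem_image_of_mem u hx) (le_refl (u x))
  have hsup : μ (u ⁻¹' Set.Ioi (u y)) ^ s ≤ ⨆ a ∈ A, μ (u ⁻¹' Set.Ici a) ^ s := by
    calc _ ≤ (⨆ a ∈ A, μ (u ⁻¹' Set.Ici a)) ^ s := by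
          rw [← measure_biUnion_preimage_Ici]
          gcongr
      _ = _ := (ENNReal.orderIsoRpow s hs).map_iSup₂ _
  refine (mul_le_mul_left hsup _).trans ?_
  simp only [ENNReal.iSup_mul]
  refine iSup₂_le ?_
  rintro _ ⟨x, hx, rfl⟩
  refine le_trans ?_ (hD x)
  gcongr
  exact hx

end LinearOrder

lemma lintegral_Ioi_min_rpow_le (m : ℝ≥0∞) {b c : ℝ} (hb : b < -1) (hc : 0 < c) :
    ∫⁻ t in Set.Ioi (0 : ℝ), min m (ENNReal.ofReal (t ^ b)) ≤
      m * ENNReal.ofReal c + ENNReal.ofReal (-c ^ (b + 1) / (b + 1)) := by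
  rw [← Set.Ioc_union_Ioi_eq_Ioi hc.le,
    lintegral_union measurableSet_Ioi (Set.Ioc_disjoint_Ioi le_rfl)]
  refine add_le_add ?_ ?_
  · calc _ ≤ ∫⁻ _ in Set.Ioc 0 c, m := lintegral_mono fun t => min_le_left _ _
      _ = _ := by rw [setLIntegral_const, Real.volume_Ioc, sub_zero]
  · rw [← integral_Ioi_rpow_of_lt hb hc,
      ofReal_integral_eq_lintegral_ofReal (integrableOn_Ioi_rpow_of_lt hb hc)]
    · exact lintegral_mono fun t => min_le_right _ _
    · filter_upwards [ae_restrict_mem measurableSet_Ioi] with t ht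
      exact Real.rpow_nonneg (hc.trans ht).le _

lemma lintegral_Ioi_min_rpow_neg_inv_le {a m : ℝ} (ha : 0 < a) (ha1 : a < 1) (hm : 0 < m) :
    ∫⁻ t in Set.Ioi (0 : ℝ), min (ENNReal.ofReal m) (ENNReal.ofReal (t ^ (-a⁻¹))) ≤
      ENNReal.ofReal (1 / (1 - a) * m ^ (1 - a)) := by
  have h1a : 0 < 1 - a := sub_pos.2 ha1
  -- `m ^ (-a)` is where the two branches of the minimum cross.
  have hc : 0 < m ^ (-a) := Real.rpow_pos_of_pos hm _
  have hsmall : m * m ^ (-a) = m ^ (1 - a) := by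
    rw [sub_eq_add_neg, Real.rpow_add hm, Real.rpow_one]
  have hlarge : -(m ^ (-a)) ^ (-a⁻¹ + 1) / (-a⁻¹ + 1) = a / (1 - a) * m ^ (1 - a) := by
    rw [← Real.rpow_mul hm.le, show -a * (-a⁻¹ + 1) = 1 - a by field_simp; ring,
      show -a⁻¹ + 1 = -((1 - a) / a) by field_simp; ring]
    field_simp
  refine (lintegral_Ioi_min_rpow_le _ (neg_lt_neg (one_lt_inv₀ ha |>.2 ha1)) hc).trans_eq ?_
  rw [← ENNReal.ofReal_mul hm.le, hsmall, hlarge,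
    ← ENNReal.ofReal_add (by positivity) (by positivity)]
  congr 1
  field_simp
  ring

lemma le_ofReal_rpow_neg_inv_of_lt_toReal_rpow_neg {a t : ℝ} (ha : 0 < a) (ht : 0 < t) {z : ℝ≥0∞}
    (hz : t < (z ^ (-a)).toReal) : z ≤ ENNReal.ofReal (t ^ (-a⁻¹)) := by
  have hlt : ENNReal.ofReal t < (z ^ a)⁻¹ := by
    rw [← ENNReal.rpow_neg]
    exact ((ENNReal.ofReal_lt_ofReal_iff_of_nonneg ht.le).2 hz).trans_le ENNReal.ofReal_toReal_le
  rw [← ENNReal.ofReal_rpow_of_pos ht, ENNReal.rpow_neg, ← ENNReal.inv_rpow,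
    ENNReal.le_rpow_inv_iff ha]
  exact (ENNReal.lt_inv_iff_lt_inv.1 hlt).le

section Measure

variable {α β : Type*} [MeasurableSpace α] [MeasurableSpace β]

lemma lintegral_rpow_neg_le {μ : Measure α} {Φ : α → ℝ≥0∞} (hΦ : Measurable Φ)
    (hμΦ : ∀ t, μ {x | Φ x ≤ t} ≤ t) {a : ℝ} (ha : 0 < a) (ha1 : a < 1) :
    ∫⁻ x, Φ x ^ (-a) ∂μ ≤ ENNReal.ofReal (1 / (1 - a)) * μ Set.univ ^ (1 - a) := by
  have h1a : 0 < 1 - a := sub_pos.2 ha1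
  rcases eq_or_ne (μ Set.univ) 0 with hμ0 | hμ0
  · simp [Measure.measure_univ_eq_zero.1 hμ0]
  rcases eq_or_ne (μ Set.univ) ∞ with hμtop | hμtop
  · simp [hμtop, ENNReal.top_rpow_of_pos h1a, ENNReal.mul_top, h1a]
  have hfin : ∀ᵐ x ∂μ, Φ x ^ (-a) ≠ ∞ := by
    have hpos : ∀ᵐ x ∂μ, Φ x ≠ 0 := by
      simpa [ae_iff] using hμΦ 0
    filter_upwards [hpos] with x hx
    simp [ENNReal.rpow_eq_top_iff, hx, ha.not_gt]
  have htail : ∀ t ∈ Set.Ioi (0 : ℝ),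
      μ {x | t < (Φ x ^ (-a)).toReal} ≤
        min (ENNReal.ofReal (μ Set.univ).toReal) (ENNReal.ofReal (t ^ (-a⁻¹))) := by
    intro t ht
    refine le_min ?_ ((measure_mono fun x hx => ?_).trans (hμΦ _))
    · rw [ENNReal.ofReal_toReal hμtop]
      exact measure_mono (Set.subset_univ _)
    · exact le_ofReal_rpow_neg_inv_of_lt_toReal_rpow_neg ha ht hx
  calc ∫⁻ x, Φ x ^ (-a) ∂μ = ∫⁻ x, ENNReal.ofReal (Φ x ^ (-a)).toReal ∂μ :=
        lintegral_congr_ae (hfin.mono fun x hx => (ENNReal.ofReal_toReal hx).symm)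
    _ = ∫⁻ t in Set.Ioi (0 : ℝ), μ {x | t < (Φ x ^ (-a)).toReal} :=
        lintegral_eq_lintegral_meas_lt μ (.of_forall fun _ => ENNReal.toReal_nonneg)
          (hΦ.pow_const _).ennreal_toReal.aemeasurable
    _ ≤ _ := setLIntegral_mono' measurableSet_Ioi htail
    _ ≤ _ := lintegral_Ioi_min_rpow_neg_inv_le ha ha1 (ENNReal.toReal_pos hμ0 hμtop)
    _ = _ := by
        rw [ENNReal.ofReal_mul (by positivity), ← ENNReal.ofReal_rpow_of_nonneg
          ENNReal.toReal_nonneg h1a.le, ENNReal.ofReal_toReal hμtop]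

lemma lintegral_le_rpow_lintegral_mul_rpow_of_measure_le {p p' : ℝ} (hpp' : p.HolderConjugate p')
    {μ : Measure α} {Φ φ : α → ℝ≥0∞} (hΦ : Measurable Φ) (hφ : Measurable φ)
    (hμΦ : ∀ t, μ {x | Φ x ≤ t} ≤ t) (hΦ_fin : ∀ᵐ x ∂μ, Φ x ≠ ∞) :
    ∫⁻ x, φ x ∂μ ≤ (∫⁻ x, φ x ^ p * Φ x ^ (1 / p') ∂μ) ^ (1 / p) *
      (ENNReal.ofReal p' * μ Set.univ ^ (1 / p')) ^ (1 / p') := by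
  have hp := hpp'.pos
  have hp' := hpp'.symm.pos
  set s := 1 / p' * (1 / p)
  have hΦ_pos : ∀ᵐ x ∂μ, Φ x ≠ 0 := by simpa [ae_iff] using hμΦ 0
  have hinsert : ∫⁻ x, φ x ∂μ = ∫⁻ x, ((φ * fun x => Φ x ^ s) * fun x => Φ x ^ (-s)) x ∂μ := by
    refine lintegral_congr_ae ?_
    filter_upwards [hΦ_pos, hΦ_fin] with x h0 htop
    simp only [Pi.mul_apply]
    rw [mul_assoc, ← ENNReal.rpow_add _ _ h0 htop, add_neg_cancel, ENNReal.rpow_zero, mul_one]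
  have hleft : ∀ x, (φ * fun x => Φ x ^ s) x ^ p = φ x ^ p * Φ x ^ (1 / p') := fun x => by
    rw [Pi.mul_apply, ENNReal.mul_rpow_of_nonneg _ _ hp.le, ← ENNReal.rpow_mul, mul_assoc,
      one_div_mul_cancel hp.ne', mul_one]
  have hright : ∀ x, (Φ x ^ (-s)) ^ p' = Φ x ^ (-(1 / p)) := fun x => by
    rw [← ENNReal.rpow_mul]
    congr 1
    simp only [s]
    field_simp
  have hneg : ∫⁻ x, Φ x ^ (-(1 / p)) ∂μ ≤ ENNReal.ofReal p' * μ Set.univ ^ (1 / p') := by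
    have := lintegral_rpow_neg_le hΦ hμΦ (one_div_pos.2 hp) ((div_lt_one hp).2 hpp'.lt)
    rwa [one_div p, hpp'.one_sub_inv, one_div, inv_inv, ← one_div, ← one_div] at this
  rw [hinsert]
  refine (ENNReal.lintegral_mul_le_Lp_mul_Lq μ hpp'
    (hφ.mul (hΦ.pow_const _)).aemeasurable (hΦ.pow_const _).aemeasurable).trans ?_
  simp only [hleft, hright]
  gcongr

lemma lintegral_lintegral_mul_le_of_holderConjugate {r s : ℝ} (hrs : r.HolderConjugate s)
    (μ : Measure α) [SFinite μ] (ν : Measure β) [SFinite ν] {K : α → β → ℝ≥0∞}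
    (hK : Measurable (Function.uncurry K)) {w : α → ℝ≥0∞} (hw : Measurable w) :
    ∫⁻ x, (∫⁻ y, K x y ∂ν) * w x ∂μ ≤
      (∫⁻ y, (∫⁻ x, K x y ^ r ∂μ) ^ (1 / r) ∂ν) * (∫⁻ x, w x ^ s ∂μ) ^ (1 / s) := by
  calc ∫⁻ x, (∫⁻ y, K x y ∂ν) * w x ∂μ
      = ∫⁻ x, ∫⁻ y, K x y * w x ∂ν ∂μ :=
        lintegral_congr fun x => (lintegral_mul_const _ hK.of_uncurry_left).symm
    _ = ∫⁻ y, ∫⁻ x, K x y * w x ∂μ ∂ν :=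
        lintegral_lintegral_swap (hK.mul (hw.comp measurable_fst)).aemeasurable
    _ ≤ ∫⁻ y, (∫⁻ x, K x y ^ r ∂μ) ^ (1 / r) * (∫⁻ x, w x ^ s ∂μ) ^ (1 / s) ∂ν :=
        lintegral_mono fun y => ENNReal.lintegral_mul_le_Lp_mul_Lq μ hrs
          hK.of_uncurry_right.aemeasurable hw.aemeasurable
    _ = _ := lintegral_mul_const _ ((hK.pow_const r).lintegral_prod_left'.pow_const _)

/-- The function `L` cut off at height `n` and outside the `n`-th spanning set of `μ`: an
increasing approximation of `L` by functions all of whose positive powers are `μ`-integrable. -/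
noncomputable def sigmaFiniteTruncation (μ : Measure α) [SigmaFinite μ] (L : α → ℝ≥0∞) (n : ℕ) :
    α → ℝ≥0∞ :=
  (spanningSets μ n).indicator fun x => min (L x) n

namespace sigmaFiniteTruncation

variable (μ : Measure α) [SigmaFinite μ] (L : α → ℝ≥0∞)

lemma le (n : ℕ) (x : α) : sigmaFiniteTruncation μ L n x ≤ L x :=
  Set.indicator_apply_le fun _ => min_le_left _ _

lemma monotone : Monotone (sigmaFiniteTruncation μ L) := fun _ _ hmn x =>
  (Set.indicator_le_indicator_of_subset (monotone_spanningSets μ hmn) (fun _ => zero_le) x).trans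
    (Set.indicator_le_indicator (min_le_min_left _ (Nat.cast_le.2 hmn)))

variable {L} in
lemma measurable (hL : Measurable L) (n : ℕ) : Measurable (sigmaFiniteTruncation μ L n) :=
  (hL.min measurable_const).indicator (measurableSet_spanningSets μ n)

lemma iSup_eq (x : α) : ⨆ n, sigmaFiniteTruncation μ L n x = L x := by
  refine le_antisymm (iSup_le fun n => le μ L n x) ?_
  obtain ⟨k, hk⟩ := Set.mem_iUnion.1 (iUnion_spanningSets μ ▸ Set.mem_univ x)
  calc L x = ⨆ n : ℕ, min (L x) n := by rw [← inf_iSup_eq, ENNReal.iSup_natCast, inf_top_eq]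
    _ ≤ _ := iSup_le fun n => le_iSup_of_le (max k n) ?_
  rw [sigmaFiniteTruncation, Set.indicator_of_mem (monotone_spanningSets μ (le_max_left k n) hk)]
  gcongr
  exact le_max_right k n

lemma lintegral_rpow_ne_top {r : ℝ} (hr : 0 < r) (n : ℕ) :
    ∫⁻ x, sigmaFiniteTruncation μ L n x ^ r ∂μ ≠ ∞ := by
  have hbound : ∀ x, sigmaFiniteTruncation μ L n x ^ r ≤
      (spanningSets μ n).indicator (fun _ => (n : ℝ≥0∞) ^ r) x := fun x => by
    by_cases hx : x ∈ spanningSets μ n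
    · simp only [sigmaFiniteTruncation, Set.indicator_of_mem hx]
      gcongr
      exact min_le_right _ _
    · simp [sigmaFiniteTruncation, Set.indicator_of_notMem hx, hr]
  refine ne_top_of_le_ne_top ?_ (lintegral_mono hbound)
  rw [lintegral_indicator_const (measurableSet_spanningSets μ n)]
  exact ENNReal.mul_ne_top (ENNReal.rpow_ne_top_of_nonneg hr.le (ENNReal.natCast_ne_top n))
    (measure_spanningSets_lt_top μ n).ne

end sigmaFiniteTruncation

lemma rpow_one_div_le_of_le_mul_rpow_one_div {r s : ℝ} (hrs : r.HolderConjugate s) {a b : ℝ≥0∞}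
    (ha : a ≠ ∞) (hab : a ≤ b * a ^ (1 / s)) : a ^ (1 / r) ≤ b := by
  rcases eq_or_ne a 0 with rfl | ha0
  · simp [hrs.pos]
  calc a ^ (1 / r) = a / a ^ (1 / s) := by
        rw [one_div, one_div, ← hrs.symm.one_sub_inv, ENNReal.rpow_sub _ _ ha0 ha, ENNReal.rpow_one]
    _ ≤ b := ENNReal.div_le_of_le_mul hab

lemma rpow_lintegral_rpow_le_of_forall_lintegral_mul_le {r s : ℝ} (hrs : r.HolderConjugate s)
    (μ : Measure α) [SigmaFinite μ] {L : α → ℝ≥0∞} (hL : Measurable L) {A : ℝ≥0∞}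
    (hA : ∀ w : α → ℝ≥0∞, Measurable w → ∫⁻ x, L x * w x ∂μ ≤ A * (∫⁻ x, w x ^ s ∂μ) ^ (1 / s)) :
    (∫⁻ x, L x ^ r ∂μ) ^ (1 / r) ≤ A := by
  have hr := hrs.pos
  set M := sigmaFiniteTruncation μ L
  have hM_meas : ∀ n, Measurable (M n) := sigmaFiniteTruncation.measurable μ hL
  have hM_int : ∀ n, ∫⁻ x, M n x ^ r ∂μ ≤ A ^ r := fun n => by
    rw [← ENNReal.rpow_inv_le_iff hr, ← one_div]
    refine rpow_one_div_le_of_le_mul_rpow_one_div hrs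
      (sigmaFiniteTruncation.lintegral_rpow_ne_top μ L hr n) ?_
    calc ∫⁻ x, M n x ^ r ∂μ = ∫⁻ x, M n x * M n x ^ (r - 1) ∂μ := by
          refine lintegral_congr fun x => ?_
          nth_rw 2 [← ENNReal.rpow_one (M n x)]
          rw [← ENNReal.rpow_add_of_nonneg _ _ zero_le_one hrs.sub_one_pos.le, add_sub_cancel]
      _ ≤ ∫⁻ x, L x * M n x ^ (r - 1) ∂μ :=
          lintegral_mono fun x => mul_le_mul_left (sigmaFiniteTruncation.le μ L n x) _
      _ ≤ A * (∫⁻ x, (M n x ^ (r - 1)) ^ s ∂μ) ^ (1 / s) := hA _ ((hM_meas n).pow_const _)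
      _ = A * (∫⁻ x, M n x ^ r ∂μ) ^ (1 / s) := by
          simp only [← ENNReal.rpow_mul, hrs.sub_one_mul_conj]
  have hL_iSup : ∀ x, L x ^ r = ⨆ n, M n x ^ r := fun x => by
    rw [← sigmaFiniteTruncation.iSup_eq μ L x]
    exact (ENNReal.orderIsoRpow r hr).map_iSup _
  rw [one_div, ENNReal.rpow_inv_le_iff hr]
  simp only [hL_iSup]
  rw [lintegral_iSup (fun n => (hM_meas n).pow_const _)
    fun m n hmn x => ENNReal.rpow_le_rpow (sigmaFiniteTruncation.monotone μ L hmn x) hr.le]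
  exact iSup_le hM_int

lemma rpow_lintegral_rpow_lintegral_le (μ : Measure α) [SigmaFinite μ] (ν : Measure β) [SFinite ν]
    {K : α → β → ℝ≥0∞} (hK : Measurable (Function.uncurry K)) {r : ℝ} (hr : 1 ≤ r) :
    (∫⁻ x, (∫⁻ y, K x y ∂ν) ^ r ∂μ) ^ (1 / r) ≤ ∫⁻ y, (∫⁻ x, K x y ^ r ∂μ) ^ (1 / r) ∂ν := by
  rcases hr.eq_or_lt with rfl | hr
  · simp only [ENNReal.rpow_one, div_one]
    exact (lintegral_lintegral_swap hK.aemeasurable).le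
  have hrs := Real.HolderConjugate.conjExponent hr
  exact rpow_lintegral_rpow_le_of_forall_lintegral_mul_le hrs μ hK.lintegral_prod_right'
    fun w hw => lintegral_lintegral_mul_le_of_holderConjugate hrs μ ν hK hw

end Measure

section Hardy

variable {α ι : Type*} [MeasurableSpace α] [LinearOrder ι] [TopologicalSpace ι]
  [OrderClosedTopology ι] [SecondCountableTopology ι] [MeasurableSpace ι] [OpensMeasurableSpace ι]
  {u : α → ι} {p p' : ℝ}

lemma measurable_measure_preimage_Iic (μ : Measure α) [SFinite μ] (hu : Measurable u) :
    Measurable fun x => μ (u ⁻¹' Set.Iic (u x)) :=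
  measurable_measure_prodMk_left
    (measurableSet_le (hu.comp measurable_snd) (hu.comp measurable_fst))

lemma measurable_measure_preimage_Ici (μ : Measure α) [SFinite μ] (hu : Measurable u) :
    Measurable fun x => μ (u ⁻¹' Set.Ici (u x)) :=
  measurable_measure_prodMk_left
    (measurableSet_le (hu.comp measurable_fst) (hu.comp measurable_snd))

lemma setLIntegral_preimage_Iio_le_rpow_mul_rpow (hpp' : p.HolderConjugate p') (σ : Measure α)
    [SFinite σ] (hu : Measurable u) {φ : α → ℝ≥0∞} (hφ : Measurable φ) {b : ι}
    (hb : σ (u ⁻¹' Set.Iio b) ≠ ∞) :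
    ∫⁻ y in u ⁻¹' Set.Iio b, φ y ∂σ ≤
      (∫⁻ y in u ⁻¹' Set.Iio b, φ y ^ p * σ (u ⁻¹' Set.Iic (u y)) ^ (1 / p') ∂σ) ^ (1 / p) *
        (ENNReal.ofReal p' * σ (u ⁻¹' Set.Iio b) ^ (1 / p')) ^ (1 / p') := by
  rw [← Measure.restrict_apply_univ (u ⁻¹' Set.Iio b)]
  refine lintegral_le_rpow_lintegral_mul_rpow_of_measure_le hpp'
    (measurable_measure_preimage_Iic σ hu) hφ (fun t => ?_) ?_
  · exact (Measure.restrict_le_self _).trans (measure_setOf_measure_preimage_Iic_le σ u t)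
  · filter_upwards [ae_restrict_mem (hu measurableSet_Iio)] with y hy
    exact ne_top_of_le_ne_top hb (measure_mono (Set.preimage_mono (Set.Iic_subset_Iio.2 hy)))

lemma withDensity_rpow_neg_preimage_Ioi_le (hpp' : p.HolderConjugate p') (μ : Measure α)
    [SFinite μ] (hu : Measurable u) (b : ι) :
    μ.withDensity (fun x => μ (u ⁻¹' Set.Ici (u x)) ^ (-(1 / p'))) (u ⁻¹' Set.Ioi b) ≤
      ENNReal.ofReal p * μ (u ⁻¹' Set.Ioi b) ^ (1 / p) := by
  have h := lintegral_rpow_neg_le (μ := μ.restrict (u ⁻¹' Set.Ioi b))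
    (measurable_measure_preimage_Ici μ hu)
    (fun t => (Measure.restrict_le_self _).trans (measure_setOf_measure_preimage_Ici_le μ u t))
    (one_div_pos.2 hpp'.symm.pos) ((div_lt_one hpp'.symm.pos).2 hpp'.symm.lt)
  rw [withDensity_apply _ (hu measurableSet_Ioi)]
  rwa [one_div p', hpp'.symm.one_sub_inv, one_div p⁻¹, inv_inv, Measure.restrict_apply_univ,
    ← one_div, ← one_div] at h

lemma rpow_lintegral_rpow_setLIntegral_preimage_Iio_le (ρ : Measure α) [SigmaFinite ρ]
    (σ : Measure α) [SFinite σ] (hu : Measurable u) {F : α → ℝ≥0∞} (hF : Measurable F) {r : ℝ}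
    (hr : 1 ≤ r) :
    (∫⁻ x, (∫⁻ y in u ⁻¹' Set.Iio (u x), F y ∂σ) ^ r ∂ρ) ^ (1 / r) ≤
      ∫⁻ y, F y * ρ (u ⁻¹' Set.Ioi (u y)) ^ (1 / r) ∂σ := by
  have hr0 : 0 < r := zero_lt_one.trans_le hr
  set K : α → α → ℝ≥0∞ := fun x => (u ⁻¹' Set.Iio (u x)).indicator F
  have hK : Measurable (Function.uncurry K) :=
    (hF.comp measurable_snd).indicator
      (measurableSet_lt (hu.comp measurable_snd) (hu.comp measurable_fst))
  have hinner : ∀ x, ∫⁻ y, K x y ∂σ = ∫⁻ y in u ⁻¹' Set.Iio (u x), F y ∂σ := fun x =>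
    lintegral_indicator (hu measurableSet_Iio) F
  have hK_rpow : ∀ x y, K x y ^ r = (u ⁻¹' Set.Ioi (u y)).indicator (fun _ => F y ^ r) x :=
    fun x y => by
      by_cases hyx : u y < u x <;> simp [K, hyx, hr0]
  have houter : ∀ y, (∫⁻ x, K x y ^ r ∂ρ) ^ (1 / r) = F y * ρ (u ⁻¹' Set.Ioi (u y)) ^ (1 / r) :=
    fun y => by
      simp only [hK_rpow]
      rw [lintegral_indicator_const (hu measurableSet_Ioi),
        ENNReal.mul_rpow_of_nonneg _ _ (one_div_nonneg.2 hr0.le), ← ENNReal.rpow_mul,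
        mul_one_div_cancel hr0.ne', ENNReal.rpow_one]
  simpa only [hinner, houter] using rpow_lintegral_rpow_lintegral_le ρ σ hK hr

lemma rpow_setLIntegral_preimage_Iio_le {q : ℝ} (hpp' : p.HolderConjugate p') (hq : 0 < q)
    {μ : Measure α} (σ : Measure α) [SFinite σ] (hu : Measurable u) {φ : α → ℝ≥0∞}
    (hφ : Measurable φ) {D : ℝ≥0∞} (hD_fin : D ≠ ∞) {b : ι} (hb : μ (u ⁻¹' Set.Ici b) ≠ 0)
    (hD : μ (u ⁻¹' Set.Ici b) ^ (1 / q) * σ (u ⁻¹' Set.Iio b) ^ (1 / p') ≤ D) :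
    (∫⁻ y in u ⁻¹' Set.Iio b, φ y ∂σ) ^ q ≤
      (ENNReal.ofReal p' * D) ^ (q / p') * (μ (u ⁻¹' Set.Ici b) ^ (-(1 / p')) *
        (∫⁻ y in u ⁻¹' Set.Iio b, φ y ^ p * σ (u ⁻¹' Set.Iic (u y)) ^ (1 / p') ∂σ) ^ (q / p)) := by
  have hp' := hpp'.symm.pos
  set m := μ (u ⁻¹' Set.Ici b)
  set J := ∫⁻ y in u ⁻¹' Set.Iio b, φ y ^ p * σ (u ⁻¹' Set.Iic (u y)) ^ (1 / p') ∂σ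
  have hm : m ^ (1 / q) ≠ 0 := by simp [ENNReal.rpow_eq_zero_iff, hb, hq.le]
  have hσ_le : σ (u ⁻¹' Set.Iio b) ^ (1 / p') ≤ D * m ^ (-(1 / q)) := by
    rw [ENNReal.rpow_neg, ← div_eq_mul_inv,
      ENNReal.le_div_iff_mul_le (.inl hm) (.inr hD_fin), mul_comm]
    exact hD
  have hσ_fin : σ (u ⁻¹' Set.Iio b) ≠ ∞ := fun htop => by
    rw [htop, ENNReal.top_rpow_of_pos (one_div_pos.2 hp'), ENNReal.mul_top hm] at hD
    exact hD_fin (top_le_iff.1 hD)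
  calc (∫⁻ y in u ⁻¹' Set.Iio b, φ y ∂σ) ^ q
      ≤ (J ^ (1 / p) * (ENNReal.ofReal p' * (D * m ^ (-(1 / q)))) ^ (1 / p')) ^ q := by
        gcongr
        exact (setLIntegral_preimage_Iio_le_rpow_mul_rpow hpp' σ hu hφ hσ_fin).trans (by gcongr)
    _ = J ^ (q / p) * ((ENNReal.ofReal p' * D) ^ (q / p') * m ^ (-(1 / p'))) := by
        rw [ENNReal.mul_rpow_of_nonneg _ _ hq.le, ← ENNReal.rpow_mul, ← ENNReal.rpow_mul,
          one_div_mul_eq_div, one_div_mul_eq_div, ← mul_assoc,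
          ENNReal.mul_rpow_of_nonneg _ _ (by positivity), ← ENNReal.rpow_mul]
        congr 3
        field_simp
    _ = _ := by ring

lemma rpow_withDensity_preimage_Ioi_mul_Iic_le {q : ℝ} (hpp' : p.HolderConjugate p') (hq : 0 < q)
    (μ : Measure α) [SFinite μ] (σ : Measure α) (hu : Measurable u) {D : ℝ≥0∞}
    (hD : ∀ x, μ (u ⁻¹' Set.Ici (u x)) ^ (1 / q) * σ (u ⁻¹' Set.Iio (u x)) ^ (1 / p') ≤ D)
    (y : α) :
    μ.withDensity (fun x => μ (u ⁻¹' Set.Ici (u x)) ^ (-(1 / p'))) (u ⁻¹' Set.Ioi (u y)) ^ (p / q) *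
      σ (u ⁻¹' Set.Iic (u y)) ^ (1 / p') ≤ ENNReal.ofReal p ^ (p / q) * D := by
  have hp := hpp'.pos
  calc _ ≤ (ENNReal.ofReal p * μ (u ⁻¹' Set.Ioi (u y)) ^ (1 / p)) ^ (p / q) *
        σ (u ⁻¹' Set.Iic (u y)) ^ (1 / p') := by
        gcongr
        exact withDensity_rpow_neg_preimage_Ioi_le hpp' μ hu (u y)
    _ = ENNReal.ofReal p ^ (p / q) * (μ (u ⁻¹' Set.Ioi (u y)) ^ (1 / q) *
          σ (u ⁻¹' Set.Iic (u y)) ^ (1 / p')) := by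
        rw [ENNReal.mul_rpow_of_nonneg _ _ (by positivity), ← ENNReal.rpow_mul,
          show 1 / p * (p / q) = 1 / q by field_simp, mul_assoc]
    _ ≤ _ := by
        gcongr
        exact rpow_measure_preimage_Ioi_mul_Iic_le (one_div_pos.2 hq)
          (one_div_nonneg.2 hpp'.symm.nonneg) hD y

lemma lintegral_rpow_neg_mul_rpow_setLIntegral_le {q : ℝ} (hpp' : p.HolderConjugate p')
    (hpq : p ≤ q) (μ : Measure α) [SigmaFinite μ] (σ : Measure α) [SFinite σ] (hu : Measurable u)
    {φ : α → ℝ≥0∞} (hφ : Measurable φ) {D : ℝ≥0∞}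
    (hD : ∀ x, μ (u ⁻¹' Set.Ici (u x)) ^ (1 / q) * σ (u ⁻¹' Set.Iio (u x)) ^ (1 / p') ≤ D) :
    ∫⁻ x, μ (u ⁻¹' Set.Ici (u x)) ^ (-(1 / p')) *
        (∫⁻ y in u ⁻¹' Set.Iio (u x),
          φ y ^ p * σ (u ⁻¹' Set.Iic (u y)) ^ (1 / p') ∂σ) ^ (q / p) ∂μ ≤
      (ENNReal.ofReal p ^ (p / q) * D * ∫⁻ y, φ y ^ p ∂σ) ^ (q / p) := by
  have hp := hpp'.pos
  have hq : 0 < q := hp.trans_le hpq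
  set F : α → ℝ≥0∞ := fun y => φ y ^ p * σ (u ⁻¹' Set.Iic (u y)) ^ (1 / p')
  have hF : Measurable F :=
    (hφ.pow_const p).mul ((measurable_measure_preimage_Iic σ hu).pow_const _)
  set w : α → ℝ≥0∞ := fun x => μ (u ⁻¹' Set.Ici (u x)) ^ (-(1 / p'))
  have hw : Measurable w := (measurable_measure_preimage_Ici μ hu).pow_const _
  have hw_fin : ∀ᵐ x ∂μ, w x ≠ ∞ := by
    filter_upwards [ae_measure_preimage_Ici_ne_zero μ u] with x hx
    simp [w, ENNReal.rpow_eq_top_iff, hx, hpp'.symm.nonneg]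
  have : SigmaFinite (μ.withDensity w) := SigmaFinite.withDensity_of_ne_top hw_fin
  calc ∫⁻ x, w x * (∫⁻ y in u ⁻¹' Set.Iio (u x), F y ∂σ) ^ (q / p) ∂μ
      = ∫⁻ x, (∫⁻ y in u ⁻¹' Set.Iio (u x), F y ∂σ) ^ (q / p) ∂μ.withDensity w :=
        (lintegral_withDensity_eq_lintegral_mul_non_measurable μ hw
          (hw_fin.mono fun _ => Ne.lt_top) _).symm
    _ ≤ (∫⁻ y, F y * μ.withDensity w (u ⁻¹' Set.Ioi (u y)) ^ (p / q) ∂σ) ^ (q / p) := by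
        rw [← ENNReal.rpow_inv_le_iff (by positivity), ← one_div, ← one_div_div q p]
        exact rpow_lintegral_rpow_setLIntegral_preimage_Iio_le _ σ hu hF ((one_le_div hp).2 hpq)
    _ ≤ (∫⁻ y, ENNReal.ofReal p ^ (p / q) * D * φ y ^ p ∂σ) ^ (q / p) := by
        refine ENNReal.rpow_le_rpow (lintegral_mono fun y => ?_) (by positivity)
        calc _ = μ.withDensity w (u ⁻¹' Set.Ioi (u y)) ^ (p / q) *
              σ (u ⁻¹' Set.Iic (u y)) ^ (1 / p') * φ y ^ p := by simp only [F]; ring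
          _ ≤ _ := mul_le_mul_left
              (rpow_withDensity_preimage_Ioi_mul_Iic_le hpp' hq μ σ hu hD y) _
    _ = _ := by rw [lintegral_const_mul _ (hφ.pow_const p)]

lemma rpow_hardy_const_mul_eq {q : ℝ} (hpp' : p.HolderConjugate p') (hq : 0 < q) (D X : ℝ≥0∞) :
    ((ENNReal.ofReal p' * D) ^ (q / p') *
        (ENNReal.ofReal p ^ (p / q) * D * X) ^ (q / p)) ^ (1 / q) =
      D * ENNReal.ofReal (p' ^ (1 / p') * p ^ (1 / q)) * X ^ (1 / p) := by
  have hp := hpp'.pos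
  have hp' := hpp'.symm.pos
  calc _ = (ENNReal.ofReal p' * D) ^ (1 / p') *
        (ENNReal.ofReal p ^ (p / q) * D * X) ^ (1 / p) := by
        rw [ENNReal.mul_rpow_of_nonneg _ _ (by positivity), ← ENNReal.rpow_mul, ← ENNReal.rpow_mul,
          show q / p' * (1 / q) = 1 / p' by field_simp, show q / p * (1 / q) = 1 / p by field_simp]
    _ = D ^ (1 / p' + 1 / p) * (ENNReal.ofReal p' ^ (1 / p') * ENNReal.ofReal p ^ (1 / q)) *
          X ^ (1 / p) := by
        rw [ENNReal.mul_rpow_of_nonneg _ _ (by positivity),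
          ENNReal.mul_rpow_of_nonneg _ _ (by positivity),
          ENNReal.mul_rpow_of_nonneg _ _ (by positivity), ← ENNReal.rpow_mul,
          show p / q * (1 / p) = 1 / q by field_simp,
          ENNReal.rpow_add_of_nonneg _ _ (by positivity) (by positivity)]
        ring
    _ = _ := by
        rw [ENNReal.ofReal_rpow_of_pos hp', ENNReal.ofReal_rpow_of_pos hp,
          ← ENNReal.ofReal_mul (by positivity), one_div p', one_div p, add_comm,
          hpp'.inv_add_inv_eq_one, ENNReal.rpow_one]

lemma rpow_lintegral_rpow_setLIntegral_eq_zero {q : ℝ} (hp : 0 < p) (hq : 0 < q) (μ σ : Measure α)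
    {φ : α → ℝ≥0∞} (hφ : Measurable φ) (hφ0 : ∫⁻ y, φ y ^ p ∂σ = 0) (s : α → Set α) :
    (∫⁻ x, (∫⁻ y in s x, φ y ∂σ) ^ q ∂μ) ^ (1 / q) = 0 := by
  have hφ_ae : ∀ᵐ y ∂σ, φ y = 0 := by
    filter_upwards [(lintegral_eq_zero_iff (hφ.pow_const p)).1 hφ0] with y hy
    exact (ENNReal.rpow_eq_zero_iff_of_pos hp).1 hy
  have hinner : ∀ x, ∫⁻ y in s x, φ y ∂σ = 0 := fun x => by
    rw [lintegral_congr_ae (ae_restrict_of_ae hφ_ae), lintegral_zero]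
  simp [hinner, hq]

theorem hardy_inequality_two_measures {q : ℝ} (hpp' : p.HolderConjugate p')
    (hpq : p ≤ q) (μ : Measure α) [SigmaFinite μ] (σ : Measure α) [SFinite σ] (hu : Measurable u)
    {φ : α → ℝ≥0∞} (hφ : Measurable φ) {D : ℝ≥0∞}
    (hD : ∀ x, μ (u ⁻¹' Set.Ici (u x)) ^ (1 / q) * σ (u ⁻¹' Set.Iio (u x)) ^ (1 / p') ≤ D) :
    (∫⁻ x, (∫⁻ y in u ⁻¹' Set.Iio (u x), φ y ∂σ) ^ q ∂μ) ^ (1 / q) ≤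
      D * ENNReal.ofReal (p' ^ (1 / p') * p ^ (1 / q)) * (∫⁻ y, φ y ^ p ∂σ) ^ (1 / p) := by
  have hp := hpp'.pos
  have hp' := hpp'.symm.pos
  have hq : 0 < q := hp.trans_le hpq
  rcases eq_or_ne D ∞ with rfl | hD_fin
  · rcases eq_or_ne (∫⁻ y, φ y ^ p ∂σ) 0 with hX | hX
    · rw [rpow_lintegral_rpow_setLIntegral_eq_zero hp hq μ σ hφ hX fun x => u ⁻¹' Set.Iio (u x)]
      exact zero_le
    · have hc : ENNReal.ofReal (p' ^ (1 / p') * p ^ (1 / q)) ≠ 0 :=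
        (ENNReal.ofReal_pos.2 (by positivity)).ne'
      have hX' : (∫⁻ y, φ y ^ p ∂σ) ^ (1 / p) ≠ 0 := by
        simp [ENNReal.rpow_eq_zero_iff, hX, hpp'.nonneg]
      rw [ENNReal.top_mul hc, ENNReal.top_mul hX']
      exact le_top
  have hconst : (ENNReal.ofReal p' * D) ^ (q / p') ≠ ∞ :=
    ENNReal.rpow_ne_top_of_nonneg (by positivity) (ENNReal.mul_ne_top ENNReal.ofReal_ne_top hD_fin)
  rw [← rpow_hardy_const_mul_eq hpp' hq]
  gcongr
  refine (lintegral_mono_ae ((ae_measure_preimage_Ici_ne_zero μ u).mono fun x hx =>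
    rpow_setLIntegral_preimage_Iio_le hpp' hq σ hu hφ hD_fin hx (hD x))).trans ?_
  rw [lintegral_const_mul' _ _ hconst]
  gcongr
  exact lintegral_rpow_neg_mul_rpow_setLIntegral_le hpp' hpq μ σ hu hφ hD

theorem hardy_inequality_two_weights {q : ℝ} (hpp' : p.HolderConjugate p')
    (hpq : p ≤ q) (ν : Measure α) [SigmaFinite ν] (hu : Measurable u)
    {f g h : α → ℝ≥0∞} (hf : Measurable f) (hg : Measurable g) (hh : Measurable h)
    (hg_fin : ∀ᵐ x ∂ν, g x ≠ ∞) (hh_pos : ∀ᵐ x ∂ν, h x ≠ 0) (hh_fin : ∀ᵐ x ∂ν, h x ≠ ∞)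
    {D : ℝ≥0∞}
    (hD : ∀ x, (∫⁻ y in u ⁻¹' Set.Ici (u x), g y ∂ν) ^ (1 / q) *
      (∫⁻ y in u ⁻¹' Set.Iio (u x), h y ^ (1 - p') ∂ν) ^ (1 / p') ≤ D) :
    (∫⁻ x, (∫⁻ y in u ⁻¹' Set.Iio (u x), f y ∂ν) ^ q * g x ∂ν) ^ (1 / q) ≤
      D * ENNReal.ofReal (p' ^ (1 / p') * p ^ (1 / q)) * (∫⁻ y, f y ^ p * h y ∂ν) ^ (1 / p) := by
  have := SigmaFinite.withDensity_of_ne_top hg_fin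
  set φ : α → ℝ≥0∞ := fun x => f x * h x ^ (p' - 1)
  have hφ : Measurable φ := hf.mul (hh.pow_const _)
  have hσ : Measurable fun x => h x ^ (1 - p') := hh.pow_const _
  have hinner : ∀ b, ∫⁻ y in u ⁻¹' Set.Iio b, φ y ∂ν.withDensity (fun x => h x ^ (1 - p')) =
      ∫⁻ y in u ⁻¹' Set.Iio b, f y ∂ν := fun b => by
    rw [setLIntegral_withDensity_eq_setLIntegral_mul ν hσ hφ (hu measurableSet_Iio)]
    refine lintegral_congr_ae (ae_restrict_of_ae ?_)
    filter_upwards [hh_pos, hh_fin] with y h0 htop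
    simp only [φ, Pi.mul_apply]
    rw [mul_left_comm, ← ENNReal.rpow_add _ _ h0 htop, sub_add_sub_cancel, sub_self,
      ENNReal.rpow_zero, mul_one]
  have hnorm : ∫⁻ y, φ y ^ p ∂ν.withDensity (fun x => h x ^ (1 - p')) =
      ∫⁻ y, f y ^ p * h y ∂ν := by
    rw [lintegral_withDensity_eq_lintegral_mul ν hσ (hφ.pow_const p)]
    refine lintegral_congr_ae ?_
    filter_upwards [hh_pos, hh_fin] with y h0 htop
    simp only [φ, Pi.mul_apply]
    rw [ENNReal.mul_rpow_of_nonneg _ _ hpp'.nonneg, ← ENNReal.rpow_mul, mul_left_comm,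
      ← ENNReal.rpow_add _ _ h0 htop, hpp'.symm.sub_one_mul_conj, sub_add_cancel,
      ENNReal.rpow_one]
  have hmain := hardy_inequality_two_measures hpp' hpq (ν.withDensity g)
    (ν.withDensity fun x => h x ^ (1 - p')) hu hφ fun x => by
      rw [withDensity_apply _ (hu measurableSet_Ici), withDensity_apply _ (hu measurableSet_Iio)]
      exact hD x
  rw [hnorm, lintegral_withDensity_eq_lintegral_mul_non_measurable ν hg
    (hg_fin.mono fun _ => Ne.lt_top)] at hmain
  simpa only [hinner, Pi.mul_apply, mul_comm (g _)] using hmain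

end Hardy

theorem integral_hardy_inequality_sufficiency_general {E F : Type*} [NormedAddCommGroup E]
    [MeasurableSpace E] [OpensMeasurableSpace E] [NormedAddCommGroup F] [MeasurableSpace F]
    [OpensMeasurableSpace F] (ν : Measure E) [SigmaFinite ν] {p q p' : ℝ}
    (hpp' : p.HolderConjugate p') (hpq : p ≤ q) {g h : E → ℝ} (hg : Measurable g)
    (hh : Measurable h) (hh_pos : ∀ᵐ x ∂ν, 0 < h x) {D : ℝ≥0∞}
    (hD : ∀ x : E, x ≠ 0 → (∫⁻ y in (ball (0 : E) ‖x‖)ᶜ, ENNReal.ofReal (g y) ∂ν) ^ (1 / q) *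
      (∫⁻ y in ball (0 : E) ‖x‖, ENNReal.ofReal (h y ^ (1 - p')) ∂ν) ^ (1 / p') ≤ D)
    {f : E → F} (hf : Measurable f) :
    (∫⁻ x, (∫⁻ y in ball (0 : E) ‖x‖, ENNReal.ofReal ‖f y‖ ∂ν) ^ q *
          ENNReal.ofReal (g x) ∂ν) ^ (1 / q)
      ≤ D * ENNReal.ofReal (p' ^ (1 / p') * p ^ (1 / q)) *
        (∫⁻ x, ENNReal.ofReal ‖f x‖ ^ p * ENNReal.ofReal (h x) ∂ν) ^ (1 / p) := by
  have hball : ∀ r, ball (0 : E) r = norm ⁻¹' Set.Iio r := ball_zero_eq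
  have hh_rpow : ∀ r, ∫⁻ y in norm ⁻¹' Set.Iio r, ENNReal.ofReal (h y) ^ (1 - p') ∂ν =
      ∫⁻ y in norm ⁻¹' Set.Iio r, ENNReal.ofReal (h y ^ (1 - p')) ∂ν := fun r =>
    lintegral_congr_ae (ae_restrict_of_ae (hh_pos.mono fun y => ENNReal.ofReal_rpow_of_pos))
  simp only [hball, ← Set.preimage_compl, Set.compl_Iio] at hD ⊢
  refine hardy_inequality_two_weights hpp' hpq ν measurable_norm
    hf.norm.ennreal_ofReal hg.ennreal_ofReal hh.ennreal_ofReal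
    (.of_forall fun _ => ENNReal.ofReal_ne_top) (hh_pos.mono fun y hy => (ofReal_pos.2 hy).ne')
    (.of_forall fun _ => ENNReal.ofReal_ne_top) fun x => ?_
  rw [hh_rpow]
  rcases eq_or_ne x 0 with rfl | hx
  · simp [← hball, hpp'.symm.pos]
  · exact hD x hx

/-- sufficiency part of the integral Hardy inequality on ℝ^N
(Euclidean case of homogeneous Lie groups, Q = N). -/
theorem integral_hardy_inequality_sufficiency
    (N : ℕ) (hN : 1 ≤ N) (p q p' : ℝ) (hp : 1 < p) (hpq : p ≤ q)
    (hp' : p' = p / (p - 1))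
    (g h : EuclideanSpace ℝ (Fin N) → ℝ)
    (hg_meas : Measurable g) (hh_meas : Measurable h)
    (hg_pos : ∀ᵐ x, 0 < g x) (hh_pos : ∀ᵐ x, 0 < h x)
    (hg_int : IntegrableOn g ({0}ᶜ) volume)
    (hh_loc : LocallyIntegrable (fun y => h y ^ (1 - p')) volume)
    (G H : EuclideanSpace ℝ (Fin N) → ℝ≥0∞)
    (hG : ∀ x, G x = ∫⁻ y in (ball (0 : EuclideanSpace ℝ (Fin N)) ‖x‖)ᶜ,
        ENNReal.ofReal (g y))
    (hH : ∀ x, H x = ∫⁻ y in ball (0 : EuclideanSpace ℝ (Fin N)) ‖x‖,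
        ENNReal.ofReal (h y ^ (1 - p')))
    (D₁ : ℝ≥0∞)
    (hD₁ : D₁ = ⨆ x : {x : EuclideanSpace ℝ (Fin N) // x ≠ 0},
        G x.1 ^ (1 / q) * H x.1 ^ (1 / p'))
    (hD₁_fin : D₁ < ∞)
    (f : EuclideanSpace ℝ (Fin N) → ℂ) (hf : Measurable f) :
    (∫⁻ x, (∫⁻ y in ball (0 : EuclideanSpace ℝ (Fin N)) ‖x‖,
          ENNReal.ofReal ‖f y‖) ^ q * ENNReal.ofReal (g x)) ^ (1 / q)
      ≤ D₁ * ENNReal.ofReal (p' ^ (1 / p') * p ^ (1 / q)) *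
        (∫⁻ x, ENNReal.ofReal ‖f x‖ ^ p * ENNReal.ofReal (h x)) ^ (1 / p) := by
  have hpp' : p.HolderConjugate p' := hp' ▸ .conjExponent hp
  refine integral_hardy_inequality_sufficiency_general volume hpp' hpq hg_meas hh_meas hh_pos
    (fun x hx => ?_) hf
  rw [← hG, ← hH, hD₁]
  exact le_iSup (fun x : {x : EuclideanSpace ℝ (Fin N) // x ≠ 0} =>
    G x.1 ^ (1 / q) * H x.1 ^ (1 / p')) ⟨x, hx⟩
end

section
/- Let N ≥ 1, 1 < p ≤ q < ∞, and let α, β ∈ ℝ satisfy β + N < 0, α < N(p−1), and q(α+N) − p(β+N) = pqN. Then for every measurable function f : ℝ^N → ℂ one has ( ∫_{ℝ^N} ( ∫_{B(0,|x|)} |f(y)| dy )^q |x|^β dx )^{1/q} ≤ (p')^{1/p'} p^{1/q} · |𝔖|^{1/q + 1/p'} / ( |β+N|^{1/q} (α(1−p') + N)^{1/p'} ) · ( ∫_{ℝ^N} |f(x)|^p |x|^α dx )^{1/p}. -/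
open MeasureTheory Metric ENNReal

/-!
Write `q * l = -(β + N)`; the balance condition then says `α = N * (p - 1) - p * l`. Apply Hölder's
inequality to the inner integral with the power weight `φ y = ‖y‖ ^ ((N - l) / p')`, and then
Minkowski's inequality in `L^(q / p)` to exchange the order of integration (this is where `p ≤ q`
enters). The remaining inner integrals, of powers of the norm over balls and over complements of
balls, are again powers, so that no estimate other than Hölder and Minkowski is needed.
-/

section Minkowski

variable {X Y : Type*} [MeasurableSpace X] [MeasurableSpace Y] {μ : Measure X} {ν : Measure Y}
  {p q : ℝ} {k : X → Y → ℝ≥0∞}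

theorem rpow_one_div_le_of_le_mul_rpow_one_div_s2 (hpq : p.HolderConjugate q) {a b : ℝ≥0∞}
    (ha : a ≠ ∞) (h : a ≤ b * a ^ (1 / q)) : a ^ (1 / p) ≤ b := by
  obtain rfl | ha₀ := eq_or_ne a 0
  · simp [hpq.pos]
  have hsplit : a ^ (1 / p) * a ^ (1 / q) = a := by
    rw [← ENNReal.rpow_add _ _ ha₀ ha, hpq.one_div_add_one_div, div_one, ENNReal.rpow_one]
  refine (ENNReal.mul_le_mul_iff_left ?_ ?_).1 (hsplit.trans_le h)
  · exact (ENNReal.rpow_pos (pos_iff_ne_zero.2 ha₀) ha).ne'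
  · exact ENNReal.rpow_ne_top_of_nonneg hpq.symm.one_div_nonneg ha

theorem lintegral_rpow_le_mul_of_le_lintegral [SFinite μ] [SFinite ν] (hpq : p.HolderConjugate q)
    (hk : Measurable (Function.uncurry k)) {g : X → ℝ≥0∞} (hg : Measurable g)
    (hgk : ∀ x, g x ≤ ∫⁻ y, k x y ∂ν) :
    ∫⁻ x, g x ^ p ∂μ ≤
      (∫⁻ y, (∫⁻ x, k x y ^ p ∂μ) ^ (1 / p) ∂ν) * (∫⁻ x, g x ^ p ∂μ) ^ (1 / q) := by
  calc ∫⁻ x, g x ^ p ∂μ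
    _ = ∫⁻ x, g x * g x ^ (p - 1) ∂μ := by
        refine lintegral_congr fun x ↦ ?_
        nth_rw 2 [← ENNReal.rpow_one (g x)]
        rw [← ENNReal.rpow_add_of_nonneg _ _ zero_le_one hpq.sub_one_pos.le, add_sub_cancel]
    _ ≤ ∫⁻ x, (∫⁻ y, k x y ∂ν) * g x ^ (p - 1) ∂μ := by gcongr with x; exact hgk x
    _ = ∫⁻ x, ∫⁻ y, k x y * g x ^ (p - 1) ∂ν ∂μ :=
        lintegral_congr fun x ↦ (lintegral_mul_const _ hk.of_uncurry_left).symm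
    _ = ∫⁻ y, ∫⁻ x, k x y * g x ^ (p - 1) ∂μ ∂ν :=
        lintegral_lintegral_swap (hk.mul ((hg.pow_const _).comp measurable_fst)).aemeasurable
    _ ≤ ∫⁻ y, (∫⁻ x, k x y ^ p ∂μ) ^ (1 / p) * (∫⁻ x, g x ^ p ∂μ) ^ (1 / q) ∂ν :=
        lintegral_mono fun y ↦ ENNReal.lintegral_mul_rpow_le_lintegral_rpow_mul_lintegral_rpow hpq
          hk.of_uncurry_right.aemeasurable hg.aemeasurable
    _ = _ := lintegral_mul_const _ ((hk.pow_const p).lintegral_prod_left'.pow_const _)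

theorem lintegral_rpow_lintegral_le_of_isFiniteMeasure [IsFiniteMeasure μ] [SFinite ν] (hp : 1 < p)
    (hk : Measurable (Function.uncurry k)) :
    ∫⁻ x, (∫⁻ y, k x y ∂ν) ^ p ∂μ ≤ (∫⁻ y, (∫⁻ x, k x y ^ p ∂μ) ^ (1 / p) ∂ν) ^ p := by
  have hp₀ : 0 < p := by linarith
  have hφ : Measurable fun x ↦ ∫⁻ y, k x y ∂ν := hk.lintegral_prod_right'
  have hpq := Real.HolderConjugate.conjExponent hp
  -- Truncation makes `∫ g ^ p` finite, so that a power of it can be cancelled.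
  let g (n : ℕ) (x : X) : ℝ≥0∞ := min (∫⁻ y, k x y ∂ν) n
  have hg n : Measurable (g n) := hφ.min measurable_const
  have hg_mono : Monotone fun n x ↦ g n x ^ p := fun m n hmn x ↦ by dsimp [g]; gcongr
  have hg_iSup x : ⨆ n, g n x ^ p = (∫⁻ y, k x y ∂ν) ^ p := by
    refine iSup_eq_of_tendsto (fun m n hmn ↦ hg_mono hmn x) ?_
    simpa using (tendsto_const_nhds.min ENNReal.tendsto_nat_nhds_top).ennrpow_const p
  have hg_fin n : ∫⁻ x, g n x ^ p ∂μ ≠ ∞ := by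
    refine ne_top_of_le_ne_top ?_ (lintegral_mono fun x ↦
      ENNReal.rpow_le_rpow (min_le_right _ _) hp₀.le)
    rw [lintegral_const]
    finiteness
  simp_rw [← hg_iSup]
  rw [lintegral_iSup (fun n ↦ (hg n).pow_const p) hg_mono]
  refine iSup_le fun n ↦ ?_
  rw [← ENNReal.rpow_inv_le_iff hp₀, ← one_div]
  exact rpow_one_div_le_of_le_mul_rpow_one_div_s2 hpq (hg_fin n)
    (lintegral_rpow_le_mul_of_le_lintegral hpq hk (hg n) fun x ↦ min_le_left _ _)

theorem lintegral_rpow_lintegral_le [SFinite μ] [SFinite ν] (hp : 1 ≤ p)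
    (hk : Measurable (Function.uncurry k)) :
    (∫⁻ x, (∫⁻ y, k x y ∂ν) ^ p ∂μ) ^ (1 / p) ≤ ∫⁻ y, (∫⁻ x, k x y ^ p ∂μ) ^ (1 / p) ∂ν := by
  obtain rfl | hp₁ := hp.eq_or_lt
  · simpa using (lintegral_lintegral_swap hk.aemeasurable).le
  have hp₀ : 0 < p := by linarith
  rw [one_div, ENNReal.rpow_inv_le_iff hp₀, ← one_div]
  nth_rw 1 [← sum_sfiniteSeq μ]
  rw [lintegral_sum_measure]
  refine ENNReal.tsum_le_of_sum_range_le fun n ↦ ?_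
  rw [← lintegral_finsetSum_measure]
  have hle : ∑ i ∈ Finset.range n, sfiniteSeq μ i ≤ μ := by
    refine Measure.le_iff.2 fun s hs ↦ ?_
    conv_rhs => rw [← sum_sfiniteSeq μ, Measure.sum_apply _ hs]
    rw [Measure.finsetSum_apply]
    exact ENNReal.sum_le_tsum _
  exact (lintegral_rpow_lintegral_le_of_isFiniteMeasure hp₁ hk).trans (by gcongr)

theorem lintegral_mul_rpow_lintegral_le [SFinite μ] [SFinite ν] (hp : 1 ≤ p)
    (hk : Measurable (Function.uncurry k)) {w : X → ℝ≥0∞} (hw : Measurable w) :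
    (∫⁻ x, w x * (∫⁻ y, k x y ∂ν) ^ p ∂μ) ^ (1 / p) ≤
      ∫⁻ y, (∫⁻ x, w x * k x y ^ p ∂μ) ^ (1 / p) ∂ν := by
  have hp₀ : 0 < p := by linarith
  have hpull (x : X) (a : ℝ≥0∞) : (w x ^ (1 / p) * a) ^ p = w x * a ^ p := by
    rw [ENNReal.mul_rpow_of_nonneg _ _ hp₀.le, one_div, ENNReal.rpow_inv_rpow hp₀.ne']
  have hk' : Measurable (Function.uncurry fun x y ↦ w x ^ (1 / p) * k x y) :=
    ((hw.pow_const _).comp measurable_fst).mul hk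
  simpa only [lintegral_const_mul _ hk.of_uncurry_left, hpull] using
    lintegral_rpow_lintegral_le hp hk'

end Minkowski

section Schur

variable {X Y : Type*} [MeasurableSpace X] [MeasurableSpace Y] {μ : Measure X} {ν : Measure Y}
  {p p' q : ℝ} {f φ : Y → ℝ≥0∞}

theorem lintegral_mul_le_rpow_mul_rpow (hp : p.HolderConjugate p') {w : Y → ℝ≥0∞}
    (hw : Measurable w) (hf : Measurable f) (hφ : Measurable φ) (hφ_zero : ∀ᵐ y ∂ν, φ y ≠ 0)
    (hφ_top : ∀ᵐ y ∂ν, φ y ≠ ∞) :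
    ∫⁻ y, w y * f y ∂ν ≤
      (∫⁻ y, w y * (f y * φ y) ^ p ∂ν) ^ (1 / p) * (∫⁻ y, w y * φ y ^ (-p') ∂ν) ^ (1 / p') := by
  have hsplit : ∫⁻ y, w y * f y ∂ν =
      ∫⁻ y, w y ^ (1 / p) * (f y * φ y) * (w y ^ (1 / p') * (φ y)⁻¹) ∂ν := by
    refine lintegral_congr_ae ?_
    filter_upwards [hφ_zero, hφ_top] with y hy₀ hy
    rw [mul_mul_mul_comm, mul_assoc (f y), ENNReal.mul_inv_cancel hy₀ hy, mul_one,
      ← ENNReal.rpow_add_of_nonneg _ _ hp.one_div_nonneg hp.symm.one_div_nonneg,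
      hp.one_div_add_one_div, div_one, ENNReal.rpow_one]
  rw [hsplit]
  refine (ENNReal.lintegral_mul_le_Lp_mul_Lq ν hp (by fun_prop) (by fun_prop)).trans_eq ?_
  simp only [ENNReal.mul_rpow_of_nonneg _ _ hp.nonneg, one_div,
    ENNReal.mul_rpow_of_nonneg _ _ hp.symm.nonneg, ENNReal.rpow_inv_rpow hp.ne_zero,
    ENNReal.rpow_inv_rpow hp.symm.ne_zero, ENNReal.inv_rpow, ENNReal.rpow_neg]

theorem lintegral_mul_rpow_lintegral_kernel_mul_le [SFinite μ] [SFinite ν]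
    (hp : p.HolderConjugate p') (hpq : p ≤ q) {k : X → Y → ℝ≥0∞}
    (hk : Measurable (Function.uncurry k)) {g : X → ℝ≥0∞} (hg : Measurable g)
    (hf : Measurable f) (hφ : Measurable φ)
    (hφ_zero : ∀ᵐ y ∂ν, φ y ≠ 0) (hφ_top : ∀ᵐ y ∂ν, φ y ≠ ∞) :
    (∫⁻ x, g x * (∫⁻ y, k x y * f y ∂ν) ^ q ∂μ) ^ (1 / q) ≤
      (∫⁻ y, (f y * φ y) ^ p *
        (∫⁻ x, g x * (∫⁻ z, k x z * φ z ^ (-p') ∂ν) ^ (q / p') * k x y ^ (q / p) ∂μ) ^ (p / q)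
          ∂ν) ^ (1 / p) := by
  have hp₀ := hp.pos
  have hq₀ : 0 < q := hp₀.trans_le hpq
  set A : X → ℝ≥0∞ := fun x ↦ ∫⁻ z, k x z * φ z ^ (-p') ∂ν
  have hA : Measurable A :=
    (hk.mul ((hφ.pow_const _).comp measurable_snd)).lintegral_prod_right'
  have hK : Measurable (Function.uncurry fun x y ↦ k x y * (f y * φ y) ^ p) :=
    hk.mul (((hf.mul hφ).pow_const p).comp measurable_snd)
  have hHolder x : (∫⁻ y, k x y * f y ∂ν) ^ q ≤
      A x ^ (q / p') * (∫⁻ y, k x y * (f y * φ y) ^ p ∂ν) ^ (q / p) := by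
    grw [lintegral_mul_le_rpow_mul_rpow hp hk.of_uncurry_left hf hφ hφ_zero hφ_top]
    rw [ENNReal.mul_rpow_of_nonneg _ _ hq₀.le, ← ENNReal.rpow_mul, ← ENNReal.rpow_mul,
      one_div_mul_eq_div, one_div_mul_eq_div, mul_comm]
  have hMinkowski : (∫⁻ x, g x * A x ^ (q / p') *
        (∫⁻ y, k x y * (f y * φ y) ^ p ∂ν) ^ (q / p) ∂μ) ^ (1 / (q / p)) ≤
      ∫⁻ y, (∫⁻ x, g x * A x ^ (q / p') * (k x y * (f y * φ y) ^ p) ^ (q / p) ∂μ) ^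
        (1 / (q / p)) ∂ν :=
    lintegral_mul_rpow_lintegral_le ((one_le_div hp₀).2 hpq) hK (hg.mul (hA.pow_const (q / p')))
  have hpull y : (∫⁻ x, g x * A x ^ (q / p') * (k x y * (f y * φ y) ^ p) ^ (q / p) ∂μ) ^
        (1 / (q / p)) =
      (f y * φ y) ^ p * (∫⁻ x, g x * A x ^ (q / p') * k x y ^ (q / p) ∂μ) ^ (p / q) := by
    have hqp : 0 < q / p := div_pos hq₀ hp₀
    have hmeas : Measurable fun x ↦ g x * A x ^ (q / p') * k x y ^ (q / p) :=
      (hg.mul (hA.pow_const _)).mul (hk.of_uncurry_right.pow_const _)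
    simp_rw [ENNReal.mul_rpow_of_nonneg (k _ y) _ hqp.le, ← mul_assoc]
    rw [lintegral_mul_const _ hmeas, ENNReal.mul_rpow_of_nonneg _ _ (one_div_pos.2 hqp).le,
      one_div, ENNReal.rpow_rpow_inv hqp.ne', inv_div, mul_comm]
  calc (∫⁻ x, g x * (∫⁻ y, k x y * f y ∂ν) ^ q ∂μ) ^ (1 / q)
    _ ≤ (∫⁻ x, g x * A x ^ (q / p') * (∫⁻ y, k x y * (f y * φ y) ^ p ∂ν) ^ (q / p) ∂μ) ^
          (1 / q) := by
        simp_rw [mul_assoc (g _)]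
        gcongr with x
        exact hHolder x
    _ = ((∫⁻ x, g x * A x ^ (q / p') * (∫⁻ y, k x y * (f y * φ y) ^ p ∂ν) ^ (q / p) ∂μ) ^
          (1 / (q / p))) ^ (1 / p) := by
        rw [← ENNReal.rpow_mul]
        congr 1
        field_simp
    _ ≤ (∫⁻ y, (f y * φ y) ^ p *
          (∫⁻ x, g x * A x ^ (q / p') * k x y ^ (q / p) ∂μ) ^ (p / q) ∂ν) ^ (1 / p) := by
        simp_rw [← hpull]
        gcongr

end Schur

section RadialPowers

open Set Module

theorem setLIntegral_Ioo_zero_ofReal_rpow {c r : ℝ} (hc : 0 < c) (hr : 0 ≤ r) :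
    ∫⁻ t in Ioo 0 r, ENNReal.ofReal (t ^ (c - 1)) = ENNReal.ofReal (r ^ c / c) := by
  rw [Measure.restrict_congr_set Ioo_ae_eq_Ioc, ← ofReal_integral_eq_lintegral_ofReal,
    ← intervalIntegral.integral_of_le hr, integral_rpow (.inl (by linarith))]
  · simp [hc.ne']
  · exact (intervalIntegral.intervalIntegrable_rpow' (by linarith)).1
  · filter_upwards [ae_restrict_mem measurableSet_Ioc] with t ht
    exact Real.rpow_nonneg ht.1.le _

theorem setLIntegral_Ioi_ofReal_rpow {c r : ℝ} (hc : 0 < c) (hr : 0 < r) :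
    ∫⁻ t in Ioi r, ENNReal.ofReal (t ^ (-c - 1)) = ENNReal.ofReal (r ^ (-c) / c) := by
  rw [← ofReal_integral_eq_lintegral_ofReal, integral_Ioi_rpow_of_lt (by linarith) hr,
    sub_add_cancel, neg_div_neg_eq]
  · exact integrableOn_Ioi_rpow_of_lt (by linarith) hr
  · filter_upwards [ae_restrict_mem measurableSet_Ioi] with t ht
    exact Real.rpow_nonneg (hr.trans ht).le _

variable {E : Type*} [NormedAddCommGroup E] [NormedSpace ℝ E] [FiniteDimensional ℝ E]
  [Nontrivial E] [MeasurableSpace E] [BorelSpace E] (μ : Measure E) [μ.IsAddHaarMeasure]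

theorem lintegral_fun_norm_addHaar {g : ℝ → ℝ≥0∞} (hg : Measurable g) :
    ∫⁻ x, g ‖x‖ ∂μ =
      μ.toSphere univ * ∫⁻ t in Ioi (0 : ℝ), ENNReal.ofReal (t ^ (finrank ℝ E - 1)) * g t := by
  have hg' : Measurable fun t : Ioi (0 : ℝ) ↦ g t := hg.comp measurable_subtype_coe
  have hg_snd : Measurable fun z : sphere (0 : E) 1 × Ioi (0 : ℝ) ↦ g z.2 :=
    hg'.comp measurable_snd
  calc ∫⁻ x, g ‖x‖ ∂μ
    _ = ∫⁻ x : ({0}ᶜ : Set E), g ‖x.1‖ ∂(μ.comap (↑)) := by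
        rw [lintegral_subtype_comap (measurableSet_singleton _).compl fun x ↦ g ‖x‖,
          restrict_compl_singleton]
    _ = ∫⁻ z, g z.2 ∂(μ.toSphere.prod (.volumeIoiPow (finrank ℝ E - 1))) := by
        rw [← μ.measurePreserving_homeomorphUnitSphereProd.lintegral_comp hg_snd]
        simp
    _ = μ.toSphere univ * ∫⁻ t, g t ∂(.volumeIoiPow (finrank ℝ E - 1)) := by
        simp [lintegral_prod _ hg_snd.aemeasurable, mul_comm]
    _ = _ := by
        rw [Measure.volumeIoiPow, lintegral_withDensity_eq_lintegral_mul _ (by fun_prop) hg',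
          ← lintegral_subtype_comap measurableSet_Ioi]
        rfl

theorem setLIntegral_norm_preimage_enorm_rpow {s : Set ℝ} (hs : MeasurableSet s) (c : ℝ) :
    ∫⁻ x in norm ⁻¹' s, ‖x‖ₑ ^ (c - finrank ℝ E) ∂μ =
      μ.toSphere univ * ∫⁻ t in s ∩ Ioi 0, ENNReal.ofReal (t ^ (c - 1)) := by
  have hdim : 1 ≤ finrank ℝ E := finrank_pos
  have hmeas : Measurable (s.indicator fun t ↦ ENNReal.ofReal t ^ (c - finrank ℝ E)) := by
    measurability
  calc ∫⁻ x in norm ⁻¹' s, ‖x‖ₑ ^ (c - finrank ℝ E) ∂μ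
    _ = ∫⁻ x, s.indicator (fun t ↦ ENNReal.ofReal t ^ (c - finrank ℝ E)) ‖x‖ ∂μ := by
        rw [← lintegral_indicator (measurable_norm hs)]
        refine lintegral_congr fun x ↦ ?_
        by_cases hx : ‖x‖ ∈ s <;> simp [hx]
    _ = μ.toSphere univ *
          ∫⁻ t in Ioi (0 : ℝ), s.indicator (fun t ↦ ENNReal.ofReal (t ^ (c - 1))) t := by
        rw [lintegral_fun_norm_addHaar μ hmeas]
        congr 1
        refine setLIntegral_congr_fun measurableSet_Ioi fun t (ht : 0 < t) ↦ ?_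
        by_cases hts : t ∈ s
        · simp only [indicator_of_mem hts]
          rw [ENNReal.ofReal_rpow_of_pos ht, ← ENNReal.ofReal_mul (by positivity),
            ← Real.rpow_natCast, ← Real.rpow_add ht, Nat.cast_sub hdim]
          congr 2
          push_cast
          ring
        · simp [hts]
    _ = _ := by rw [setLIntegral_indicator hs]

theorem setLIntegral_ball_enorm_rpow {c r : ℝ} (hc : 0 < c) (hr : 0 ≤ r) :
    ∫⁻ x in ball 0 r, ‖x‖ₑ ^ (c - finrank ℝ E) ∂μ =
      μ.toSphere univ / ENNReal.ofReal c * ENNReal.ofReal r ^ c := by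
  have hball : ball (0 : E) r = norm ⁻¹' Iio r := by ext; simp
  rw [hball, setLIntegral_norm_preimage_enorm_rpow μ measurableSet_Iio, inter_comm, Ioi_inter_Iio,
    setLIntegral_Ioo_zero_ofReal_rpow hc hr, ENNReal.ofReal_div_of_pos hc,
    ENNReal.ofReal_rpow_of_nonneg hr hc.le, mul_div_assoc', div_eq_mul_inv, div_eq_mul_inv]
  ring

theorem setLIntegral_compl_closedBall_enorm_rpow {c r : ℝ} (hc : 0 < c) (hr : 0 < r) :
    ∫⁻ x in (closedBall 0 r)ᶜ, ‖x‖ₑ ^ (-c - finrank ℝ E) ∂μ =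
      μ.toSphere univ / ENNReal.ofReal c * ENNReal.ofReal r ^ (-c) := by
  have hball : (closedBall (0 : E) r)ᶜ = norm ⁻¹' Ioi r := by ext; simp
  rw [hball, setLIntegral_norm_preimage_enorm_rpow μ measurableSet_Ioi,
    inter_eq_left.2 (Ioi_subset_Ioi hr.le), setLIntegral_Ioi_ofReal_rpow hc hr,
    ENNReal.ofReal_div_of_pos hc, ENNReal.ofReal_rpow_of_pos hr, mul_div_assoc', div_eq_mul_inv,
    div_eq_mul_inv]
  ring

end RadialPowers

section Hardy

open Module

variable {p p' q : ℝ}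

theorem lintegral_mul_rpow_lintegral_ball_le {E : Type*} [SeminormedAddCommGroup E]
    [MeasurableSpace E] [OpensMeasurableSpace E] {μ : Measure E} [SFinite μ]
    (hp : p.HolderConjugate p') (hpq : p ≤ q) {g f φ : E → ℝ≥0∞} (hg : Measurable g)
    (hf : Measurable f) (hφ : Measurable φ) (hφ_zero : ∀ᵐ y ∂μ, φ y ≠ 0)
    (hφ_top : ∀ᵐ y ∂μ, φ y ≠ ∞) :
    (∫⁻ x, g x * (∫⁻ y in ball 0 ‖x‖, f y ∂μ) ^ q ∂μ) ^ (1 / q) ≤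
      (∫⁻ y, (f y * φ y) ^ p *
        (∫⁻ x in (closedBall 0 ‖y‖)ᶜ, g x * (∫⁻ z in ball 0 ‖x‖, φ z ^ (-p') ∂μ) ^ (q / p') ∂μ) ^
          (p / q) ∂μ) ^ (1 / p) := by
  have hqp : 0 < q / p := div_pos (hp.pos.trans_le hpq) hp.pos
  let k (x y : E) : ℝ≥0∞ := (ball 0 ‖x‖).indicator 1 y
  have hk : Measurable (Function.uncurry k) :=
    measurable_one.indicator (s := {z : E × E | z.2 ∈ ball 0 ‖z.1‖}) <| by
      simpa only [mem_ball_zero_iff, Function.comp_def] using measurableSet_lt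
        (continuous_norm.measurable.comp measurable_snd)
        (continuous_norm.measurable.comp measurable_fst)
  have hk_left (x : E) (u : E → ℝ≥0∞) : ∫⁻ y, k x y * u y ∂μ = ∫⁻ y in ball 0 ‖x‖, u y ∂μ := by
    rw [← lintegral_indicator measurableSet_ball]
    refine lintegral_congr fun y ↦ ?_
    by_cases hxy : ‖y‖ < ‖x‖ <;> simp [k, hxy]
  have hk_right (y : E) (u : E → ℝ≥0∞) :
      ∫⁻ x, u x * k x y ^ (q / p) ∂μ = ∫⁻ x in (closedBall 0 ‖y‖)ᶜ, u x ∂μ := by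
    rw [← lintegral_indicator measurableSet_closedBall.compl]
    refine lintegral_congr fun x ↦ ?_
    by_cases hxy : ‖y‖ < ‖x‖ <;> simp [k, hxy, hqp]
  have hSchur := lintegral_mul_rpow_lintegral_kernel_mul_le (μ := μ) hp hpq hk hg hf hφ hφ_zero
    hφ_top
  simp_rw [hk_left] at hSchur
  simpa only [hk_right _ fun x ↦ g x * _] using hSchur

variable {E : Type*} [NormedAddCommGroup E] [NormedSpace ℝ E] [FiniteDimensional ℝ E]
  [Nontrivial E] [MeasurableSpace E] [BorelSpace E] (μ : Measure E) [μ.IsAddHaarMeasure]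

theorem setLIntegral_compl_closedBall_enorm_rpow_mul_rpow_setLIntegral_ball
    (hp : p.HolderConjugate p') (hq : 0 < q) {l : ℝ} (hl : 0 < l) {y : E} (hy : y ≠ 0) :
    (∫⁻ x in (closedBall 0 ‖y‖)ᶜ, ‖x‖ₑ ^ (-(q * l) - finrank ℝ E) *
        (∫⁻ z in ball 0 ‖x‖, ‖z‖ₑ ^ (l - finrank ℝ E) ∂μ) ^ (q / p') ∂μ) ^ (p / q) =
      ((μ.toSphere Set.univ / ENNReal.ofReal l) ^ (1 / p') *
        (μ.toSphere Set.univ / ENNReal.ofReal (q * l / p)) ^ (1 / q)) ^ p * ‖y‖ₑ ^ (-l) := by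
  have hp₀ := hp.pos
  have hp'₀ := hp.symm.pos
  have hexp : -(q * l) - finrank ℝ E + l * (q / p') = -(q * l / p) - finrank ℝ E := by
    have := hp.inv_add_inv_eq_one
    linear_combination q * l * this
  have hexp_dual : q / p' * (p / q) = 1 / p' * p := by field_simp
  have hexp_outer : -(q * l / p) * (p / q) = -l := by field_simp
  have hinner : ∀ x ∈ (closedBall (0 : E) ‖y‖)ᶜ, ‖x‖ₑ ^ (-(q * l) - finrank ℝ E) *
        (∫⁻ z in ball 0 ‖x‖, ‖z‖ₑ ^ (l - finrank ℝ E) ∂μ) ^ (q / p') =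
      (μ.toSphere Set.univ / ENNReal.ofReal l) ^ (q / p') *
        ‖x‖ₑ ^ (-(q * l / p) - finrank ℝ E) := by
    intro x hx
    have hx₀ : x ≠ 0 := by rintro rfl; simp at hx
    rw [setLIntegral_ball_enorm_rpow μ hl (norm_nonneg x), ofReal_norm,
      ENNReal.mul_rpow_of_nonneg _ _ (by positivity), ← ENNReal.rpow_mul, mul_left_comm,
      ← ENNReal.rpow_add _ _ (enorm_ne_zero.2 hx₀) enorm_ne_top, hexp]
  rw [setLIntegral_congr_fun measurableSet_closedBall.compl hinner,
    lintegral_const_mul _ (by fun_prop),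
    setLIntegral_compl_closedBall_enorm_rpow μ (by positivity) (norm_pos_iff.2 hy), ofReal_norm,
    ENNReal.mul_rpow_of_nonneg _ _ hp₀.le, ENNReal.mul_rpow_of_nonneg _ _ (by positivity),
    ENNReal.mul_rpow_of_nonneg _ _ (by positivity), ← ENNReal.rpow_mul, ← ENNReal.rpow_mul,
    ← ENNReal.rpow_mul, ← ENNReal.rpow_mul, hexp_dual, hexp_outer, one_div_mul_eq_div q p,
    mul_assoc]

theorem lintegral_rpow_lintegral_ball_mul_enorm_rpow_le (hp : p.HolderConjugate p') (hpq : p ≤ q)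
    {l : ℝ} (hl : 0 < l) {f : E → ℝ≥0∞} (hf : Measurable f) :
    (∫⁻ x, (∫⁻ y in ball 0 ‖x‖, f y ∂μ) ^ q * ‖x‖ₑ ^ (-(q * l) - finrank ℝ E) ∂μ) ^ (1 / q) ≤
      (μ.toSphere Set.univ / ENNReal.ofReal l) ^ (1 / p') *
        (μ.toSphere Set.univ / ENNReal.ofReal (q * l / p)) ^ (1 / q) *
        (∫⁻ y, f y ^ p * ‖y‖ₑ ^ (finrank ℝ E * (p - 1) - p * l) ∂μ) ^ (1 / p) := by
  have hp₀ := hp.pos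
  have hp'₀ := hp.symm.pos
  have hq₀ : 0 < q := hp₀.trans_le hpq
  have hne : ∀ᵐ y ∂μ, y ≠ 0 := by simp [ae_iff]
  have hdual (z : E) : (‖z‖ₑ ^ ((finrank ℝ E - l) / p')) ^ (-p') = ‖z‖ₑ ^ (l - finrank ℝ E) := by
    rw [← ENNReal.rpow_mul]
    congr 1
    field_simp
    ring
  have hweight (C : ℝ≥0∞) {y : E} (hy : y ≠ 0) :
      (f y * ‖y‖ₑ ^ ((finrank ℝ E - l) / p')) ^ p * (C * ‖y‖ₑ ^ (-l)) =
        C * (f y ^ p * ‖y‖ₑ ^ (finrank ℝ E * (p - 1) - p * l)) := by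
    have hexp : (finrank ℝ E - l) / p' * p + -l = finrank ℝ E * (p - 1) - p * l := by
      rw [div_mul_eq_mul_div, mul_div_assoc, hp.div_conj_eq_sub_one]
      ring
    rw [ENNReal.mul_rpow_of_nonneg _ _ hp₀.le, ← ENNReal.rpow_mul, mul_left_comm,
      mul_assoc (f y ^ p), ← ENNReal.rpow_add _ _ (enorm_ne_zero.2 hy) enorm_ne_top, hexp]
  simp_rw [mul_comm (_ ^ q)]
  refine (lintegral_mul_rpow_lintegral_ball_le hp hpq (by fun_prop) hf
    (φ := fun y ↦ ‖y‖ₑ ^ ((finrank ℝ E - l) / p')) (by fun_prop) ?_ ?_).trans ?_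
  · filter_upwards [hne] with y hy
    exact (ENNReal.rpow_pos (enorm_pos.2 hy) enorm_ne_top).ne'
  · filter_upwards [hne] with y hy
    exact ENNReal.rpow_ne_top_of_ne_zero (enorm_ne_zero.2 hy) enorm_ne_top
  simp_rw [hdual]
  rw [one_div p, ENNReal.rpow_inv_le_iff hp₀, ENNReal.mul_rpow_of_nonneg _ _ hp₀.le,
    ENNReal.rpow_inv_rpow hp₀.ne', ← lintegral_const_mul _ (by fun_prop)]
  refine (lintegral_congr_ae ?_).le
  filter_upwards [hne] with y hy
  rw [setLIntegral_compl_closedBall_enorm_rpow_mul_rpow_setLIntegral_ball μ hp hq₀ hl hy,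
    hweight _ hy]

theorem ofReal_rpow_mul_rpow_mul_div_eq {S l : ℝ} (hS : 0 < S) (hl : 0 < l)
    (hp : 0 < p) (hp' : 0 < p') (hq : 0 < q) :
    ENNReal.ofReal (p' ^ (1 / p') * p ^ (1 / q) *
        (S ^ (1 / q + 1 / p') / ((q * l) ^ (1 / q) * (p' * l) ^ (1 / p')))) =
      (ENNReal.ofReal S / ENNReal.ofReal l) ^ (1 / p') *
        (ENNReal.ofReal S / ENNReal.ofReal (q * l / p)) ^ (1 / q) := by
  rw [← ENNReal.ofReal_div_of_pos hl, ← ENNReal.ofReal_div_of_pos (by positivity),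
    ENNReal.ofReal_rpow_of_pos (by positivity), ENNReal.ofReal_rpow_of_pos (by positivity),
    ← ENNReal.ofReal_mul (by positivity), Real.rpow_add hS, div_div_eq_mul_div,
    Real.div_rpow hS.le hl.le, Real.div_rpow (by positivity) (by positivity),
    Real.mul_rpow hS.le hp.le, Real.mul_rpow hp'.le hl.le]
  congr 1
  field_simp

theorem integral_hardy_inequality_power_weights_general {α β S : ℝ} (hp : p.HolderConjugate p')
    (hpq : p ≤ q) (hβ : β + finrank ℝ E < 0)
    (hbal : q * (α + finrank ℝ E) - p * (β + finrank ℝ E) = p * q * finrank ℝ E)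
    (hS : ENNReal.ofReal S = finrank ℝ E * μ (ball 0 1)) {f : E → ℝ≥0∞} (hf : Measurable f) :
    (∫⁻ x, (∫⁻ y in ball 0 ‖x‖, f y ∂μ) ^ q * ‖x‖ₑ ^ β ∂μ) ^ (1 / q) ≤
      ENNReal.ofReal (p' ^ (1 / p') * p ^ (1 / q) *
          (S ^ (1 / q + 1 / p') /
            (|β + finrank ℝ E| ^ (1 / q) * (α * (1 - p') + finrank ℝ E) ^ (1 / p')))) *
        (∫⁻ x, f x ^ p * ‖x‖ₑ ^ α ∂μ) ^ (1 / p) := by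
  have hp₀ := hp.pos
  have hq₀ : 0 < q := hp₀.trans_le hpq
  have hS₀ : 0 < S := by
    rw [← ENNReal.ofReal_pos, hS]
    exact ENNReal.mul_pos (by exact_mod_cast finrank_pos.ne') (measure_ball_pos μ _ one_pos).ne'
  obtain ⟨l, hβl⟩ : ∃ l, β = -(q * l) - finrank ℝ E :=
    ⟨-(β + finrank ℝ E) / q, by field_simp; ring⟩
  have hl : 0 < l := pos_of_mul_pos_right (a := q) (by linarith) hq₀.le
  have hαl : α = finrank ℝ E * (p - 1) - p * l := by
    apply mul_left_cancel₀ hq₀.ne'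
    linear_combination hbal + p * hβl
  have hβ_abs : |β + finrank ℝ E| = q * l := by rw [abs_of_neg hβ, hβl]; ring
  have hα_dual : α * (1 - p') + finrank ℝ E = p' * l := by
    rw [hαl]
    linear_combination (l - finrank ℝ E) * hp.mul_eq_add
  rw [hβ_abs, hα_dual, ofReal_rpow_mul_rpow_mul_div_eq hS₀ hl hp₀ hp.symm.pos hq₀, hS,
    ← μ.toSphere_apply_univ, hβl, hαl]
  exact lintegral_rpow_lintegral_ball_mul_enorm_rpow_le μ hp hpq hl hf

end Hardy

/-- power-weight example of the integral Hardy inequality on ℝ^N,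
with g(x) = |x|^β, h(x) = |x|^α.  Here S = |𝔖| is the surface measure of the
unit sphere, characterized by |B(0,1)| = S / N. -/
theorem integral_hardy_inequality_power_weights
    (N : ℕ) (hN : 1 ≤ N) (p q p' α β S : ℝ) (hp : 1 < p) (hpq : p ≤ q)
    (hp' : p' = p / (p - 1))
    (hβ : β + N < 0) (hα : α < N * (p - 1))
    (hbal : q * (α + N) - p * (β + N) = p * q * N)
    (hS : ENNReal.ofReal S = N * volume (ball (0 : EuclideanSpace ℝ (Fin N)) 1))
    (f : EuclideanSpace ℝ (Fin N) → ℂ) (hf : Measurable f) :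
    (∫⁻ x : EuclideanSpace ℝ (Fin N),
        (∫⁻ y in ball (0 : EuclideanSpace ℝ (Fin N)) ‖x‖,
          ENNReal.ofReal ‖f y‖) ^ q * ENNReal.ofReal ‖x‖ ^ β) ^ (1 / q)
      ≤ ENNReal.ofReal (p' ^ (1 / p') * p ^ (1 / q) *
          (S ^ (1 / q + 1 / p') /
            (|β + N| ^ (1 / q) * (α * (1 - p') + N) ^ (1 / p')))) *
        (∫⁻ x : EuclideanSpace ℝ (Fin N),
          ENNReal.ofReal ‖f x‖ ^ p * ENNReal.ofReal ‖x‖ ^ α) ^ (1 / p) := by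
  have : Nonempty (Fin N) := ⟨⟨0, hN⟩⟩
  have hconj : p.HolderConjugate p' := hp' ▸ .conjExponent hp
  simpa [ofReal_norm] using integral_hardy_inequality_power_weights_general volume
    hconj hpq (by simpa using hβ) (by simpa using hbal) (by simpa using hS) hf.enorm
end
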